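/- arXiv:2302.01077 — 2 statements merged into one kernel-verified Lean document; each statement's English description precedes it below -/
import Mathlib

section
/- Let C be an A-component of G_∞(H), and define C_{+1} (respectively C_{-1}) as the set of all X ∈ G_∞(H) containing some element of C as a hyperplane (respectively, which are a hyperplane in some element of C). Then X ∈ G_∞(H) belongs to C_{+1} if and only if the top G^1(X) is contained in C, and X belongs to C_{-1} if and only if the star S(X) is contained in C. -/
open Module Submodule Classical

variable {H : Type*} [NormedAddCommGroup H] [InnerProductSpace ℂ H] [CompleteSpace H]

/-- The orthogonal projection of `H` onto a closed subspace `K`, as a map `H →L[ℂ] H`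
(defined to be `0` if `K` is not closed). -/
noncomputable def projCLM (K : Submodule ℂ H) : H →L[ℂ] H :=
  if h : IsClosed (K : Set H) then
    haveI : CompleteSpace K := h.completeSpace_coe
    K.subtypeL.comp (orthogonalProjection K)
  else 0

/-- Two (closed) subspaces are compatible if their orthogonal projections commute. -/
def Compatible (K L : Submodule ℂ H) : Prop := Commute (projCLM K) (projCLM L)

/-- `W` is a subspace of `X` of finite codimension `n` in `X`. -/
def CodimIn (W X : Submodule ℂ H) (n : ℕ) : Prop :=
  W ≤ X ∧ FiniteDimensional ℂ (↥X ⧸ W.comap X.subtype) ∧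
    finrank ℂ (↥X ⧸ W.comap X.subtype) = n

/-- `X` and `Y` are adjacent: `X ∩ Y` is a hyperplane in both `X` and `Y`. -/
def Adjacent (X Y : Submodule ℂ H) : Prop :=
  CodimIn (X ⊓ Y) X 1 ∧ CodimIn (X ⊓ Y) Y 1

/-- `X` and `Y` are ortho-adjacent: adjacent and compatible. -/
def OrthoAdjacent (X Y : Submodule ℂ H) : Prop := Adjacent X Y ∧ Compatible X Y

/-- The Grassmannian `G_∞(H)` of closed subspaces of `H` whose dimension and
codimension both are infinite. -/
def Ginf : Set (Submodule ℂ H) :=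
  {X | IsClosed (X : Set H) ∧ ¬FiniteDimensional ℂ X ∧ ¬FiniteDimensional ℂ Xᗮ}

/-- `X ∩ Y` has the same finite codimension in both `X` and `Y`. -/
def SameFinCodim (X Y : Submodule ℂ H) : Prop :=
  ∃ n : ℕ, CodimIn (X ⊓ Y) X n ∧ CodimIn (X ⊓ Y) Y n

/-- An `A`-component of `G_∞(H)`: a set of elements pairwise at the same finite
codimension, maximal with respect to this property. -/
def IsAComponent (C : Set (Submodule ℂ H)) : Prop :=
  C ⊆ Ginf ∧ (∀ X ∈ C, ∀ Y ∈ C, SameFinCodim X Y) ∧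
    ∀ D : Set (Submodule ℂ H), D ⊆ Ginf → (∀ X ∈ D, ∀ Y ∈ D, SameFinCodim X Y) →
      C ⊆ D → D = C

/-- The star `S(X)`: all closed subspaces of `H` containing `X` as a hyperplane. -/
def starSet (X : Submodule ℂ H) : Set (Submodule ℂ H) :=
  {Y | IsClosed (Y : Set H) ∧ CodimIn X Y 1}

/-- The top `G¹(X)`: all closed hyperplanes of `X`. -/
def topSet (X : Submodule ℂ H) : Set (Submodule ℂ H) :=
  {M | IsClosed (M : Set H) ∧ CodimIn M X 1}

/-- The image `U(M)` of a subspace `M ⊆ X` under a linear isometry `U : X ≃ X'`,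
viewed as a subspace of `H`. -/
def imL (X X' : Submodule ℂ H) (U : ↥X ≃ₗᵢ[ℂ] ↥X') (M : Submodule ℂ H) : Submodule ℂ H :=
  Submodule.map X'.subtype (Submodule.map U.toLinearEquiv.toLinearMap (M.comap X.subtype))

/-- The image `U(M)` of a subspace `M ⊆ X` under a conjugate-linear isometry `U : X ≃ X'`,
viewed as a subspace of `H`. -/
def imC (X X' : Submodule ℂ H) (U : ↥X ≃ₗᵢ⋆[ℂ] ↥X') (M : Submodule ℂ H) : Submodule ℂ H :=
  Submodule.map X'.subtype (Submodule.map U.toLinearEquiv.toLinearMap (M.comap X.subtype))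

/-- The Grassmannian `G_k(H)` of `k`-dimensional subspaces of `H`. -/
def Gk (k : ℕ) : Set (Submodule ℂ H) :=
  {X | FiniteDimensional ℂ X ∧ finrank ℂ X = k}

/-- The Grassmannian `G^k(H)` of closed subspaces of `H` of codimension `k`. -/
def GCk (k : ℕ) : Set (Submodule ℂ H) :=
  {X | IsClosed (X : Set H) ∧ FiniteDimensional ℂ (H ⧸ X) ∧ finrank ℂ (H ⧸ X) = k}


section helpers

noncomputable def cdl (W X : Submodule ℂ H) : ℕ∞ := Module.length ℂ (↥X ⧸ W.comap X.subtype)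

lemma codimIn_iff (W X : Submodule ℂ H) (n : ℕ) :
    CodimIn W X n ↔ W ≤ X ∧ cdl W X = n := by
  unfold CodimIn cdl
  refine and_congr_right fun _ => ?_
  constructor
  · rintro ⟨h1, h2⟩
    rw [Module.length_eq_finrank, h2]
  · intro h
    have hf : Module.length ℂ (↥X ⧸ W.comap X.subtype) ≠ ⊤ := by rw [h]; simp
    rw [Module.length_ne_top_iff, isFiniteLength_iff_isNoetherian_isArtinian] at hf
    haveI := hf.1
    have : FiniteDimensional ℂ (↥X ⧸ W.comap X.subtype) := inferInstance
    refine ⟨this, ?_⟩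
    rw [Module.length_eq_finrank] at h
    exact_mod_cast h

lemma cdl_add {W X Z : Submodule ℂ H} (h1 : W ≤ X) (h2 : X ≤ Z) :
    cdl W Z = cdl W X + cdl X Z := by
  unfold cdl
  let f : (↥X ⧸ W.comap X.subtype) →ₗ[ℂ] (↥Z ⧸ W.comap Z.subtype) :=
    Submodule.mapQ _ _ (Submodule.inclusion h2) (fun x hx => hx)
  let g : (↥Z ⧸ W.comap Z.subtype) →ₗ[ℂ] (↥Z ⧸ X.comap Z.subtype) :=
    Submodule.factor (Submodule.comap_mono h1)
  refine Module.length_eq_add_of_exact f g ?_ ?_ ?_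
  · rw [injective_iff_map_eq_zero]
    intro a
    obtain ⟨x, rfl⟩ := Submodule.Quotient.mk_surjective _ a
    intro h
    rw [Submodule.Quotient.mk_eq_zero]
    exact (Submodule.Quotient.mk_eq_zero (W.comap Z.subtype) (x := Submodule.inclusion h2 x)).1 h
  · exact Submodule.factor_surjective _
  · intro a
    obtain ⟨z, rfl⟩ := Submodule.Quotient.mk_surjective _ a
    constructor
    · intro h
      have h' : z ∈ X.comap Z.subtype := by
        simpa [g] using h
      exact ⟨Submodule.Quotient.mk ⟨z, h'⟩, rfl⟩
    · rintro ⟨b, hb⟩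
      obtain ⟨x, rfl⟩ := Submodule.Quotient.mk_surjective _ b
      rw [← hb]
      exact (Submodule.Quotient.mk_eq_zero (X.comap Z.subtype)
        (x := Submodule.inclusion h2 x)).2 x.2

lemma cdl_mono {A B A' B' : Submodule ℂ H} (hA : A ≤ A') (hB : B ≤ B') (h : B ⊓ A' ≤ A) :
    cdl A B ≤ cdl A' B' := by
  unfold cdl
  refine Module.length_le_of_injective
    (Submodule.mapQ _ _ (Submodule.inclusion hB) (fun x hx => hA hx)) ?_
  rw [injective_iff_map_eq_zero]
  intro a
  obtain ⟨x, rfl⟩ := Submodule.Quotient.mk_surjective _ a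
  intro hx
  simp only [Submodule.mapQ_apply, Submodule.Quotient.mk_eq_zero] at hx ⊢
  exact h ⟨x.2, hx⟩

lemma same_iff (X Y : Submodule ℂ H) :
    SameFinCodim X Y ↔ cdl (X ⊓ Y) X = cdl (X ⊓ Y) Y ∧ cdl (X ⊓ Y) X ≠ ⊤ := by
  unfold SameFinCodim
  simp only [codimIn_iff, inf_le_left, inf_le_right, true_and]
  constructor
  · rintro ⟨n, h1, h2⟩
    rw [h1, h2]; simp
  · rintro ⟨h, h2⟩
    lift cdl (X ⊓ Y) X to ℕ using h2 with n hn
    exact ⟨n, rfl, h.symm⟩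

lemma same_of_lower {W X Y : Submodule ℂ H} (h1 : W ≤ X) (h2 : W ≤ Y)
    (h : cdl W X = cdl W Y) (hf : cdl W X ≠ ⊤) : SameFinCodim X Y := by
  rw [same_iff]
  have e1 := cdl_add (le_inf h1 h2) (inf_le_left : X ⊓ Y ≤ X)
  have e2 := cdl_add (le_inf h1 h2) (inf_le_right : X ⊓ Y ≤ Y)
  rw [e1, e2] at h
  rw [e1, Ne, ENat.add_eq_top, not_or] at hf
  exact ⟨ENat.add_right_injective_of_ne_top hf.1 h, hf.2⟩

lemma same_of_upper {X Y Z : Submodule ℂ H} (h1 : X ≤ Z) (h2 : Y ≤ Z)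
    (h : cdl X Z = cdl Y Z) (hf : cdl X Z ≠ ⊤) : SameFinCodim X Y := by
  rw [same_iff]
  have e1 := cdl_add (inf_le_left : X ⊓ Y ≤ X) h1
  have e2 := cdl_add (inf_le_right : X ⊓ Y ≤ Y) h2
  rw [e1, ← h] at e2
  have := cdl_mono (inf_le_right : X ⊓ Y ≤ Y) h1 le_rfl
  exact ⟨ENat.add_left_injective_of_ne_top hf e2, ne_top_of_le_ne_top (h ▸ hf) this⟩

lemma same_symm {X Y : Submodule ℂ H} (h : SameFinCodim X Y) : SameFinCodim Y X := by
  obtain ⟨n, h1, h2⟩ := h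
  rw [inf_comm] at h1 h2
  exact ⟨n, h2, h1⟩

lemma same_refl (X : Submodule ℂ H) : SameFinCodim X X := by
  rw [same_iff]
  refine ⟨rfl, ?_⟩
  have : cdl (X ⊓ X) X = 0 := by
    unfold cdl
    rw [Module.length_eq_zero_iff, Submodule.Quotient.subsingleton_iff]
    simp
  rw [this]; simp

lemma same_trans {X Y Z : Submodule ℂ H} (h1 : SameFinCodim X Y) (h2 : SameFinCodim Y Z) :
    SameFinCodim X Z := by
  rw [same_iff] at h1 h2
  have a : X ⊓ Y ⊓ Z ≤ X ⊓ Y := inf_le_left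
  have b : X ⊓ Y ⊓ Z ≤ Y ⊓ Z := inf_le_inf_right _ inf_le_right
  have e1 := cdl_add a (inf_le_left : X ⊓ Y ≤ X)
  have e2 := cdl_add a (inf_le_right : X ⊓ Y ≤ Y)
  have e3 := cdl_add b (inf_le_left : Y ⊓ Z ≤ Y)
  have e4 := cdl_add b (inf_le_right : Y ⊓ Z ≤ Z)
  have e5 : cdl (X ⊓ Y ⊓ Z) (X ⊓ Y) ≤ cdl (Y ⊓ Z) Y :=
    cdl_mono b inf_le_right (le_inf inf_le_left (inf_le_right.trans inf_le_right))
  have hf : cdl (X ⊓ Y ⊓ Z) X ≠ ⊤ := by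
    rw [e1, Ne, ENat.add_eq_top, not_or]
    exact ⟨ne_top_of_le_ne_top h2.2 e5, h1.2⟩
  refine same_of_lower (a.trans inf_le_left) (b.trans inf_le_right) ?_ hf
  rw [e1, h1.1, ← e2, e3, h2.1, ← e4]

lemma mem_of_same {C : Set (Submodule ℂ H)} (hC : IsAComponent C) {X Y : Submodule ℂ H}
    (hX : X ∈ C) (hY : Y ∈ Ginf (H := H)) (h : SameFinCodim X Y) : Y ∈ C := by
  obtain ⟨h1, h2, h3⟩ := hC
  have := h3 (insert Y C) (Set.insert_subset hY h1) ?_ (Set.subset_insert _ _)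
  · rw [← this]; exact Set.mem_insert _ _
  · have key : ∀ Z ∈ C, SameFinCodim Y Z := fun Z hZ => same_trans (same_symm h) (h2 X hX Z hZ)
    rintro A (rfl | hA) B (rfl | hB)
    · exact same_refl _
    · exact key B hB
    · exact same_symm (key A hA)
    · exact h2 A hA B hB

lemma codimIn_orth {x : H} {X : Submodule ℂ H} {y : H} (hy : y ∈ X) (hxy : inner ℂ x y ≠ 0) :
    CodimIn (X ⊓ (ℂ ∙ x)ᗮ) X 1 := by
  refine ⟨inf_le_left, ?_⟩
  let f : ↥X →ₗ[ℂ] ℂ := (innerSL ℂ x).toLinearMap.comp X.subtype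
  have hk : (X ⊓ (ℂ ∙ x)ᗮ).comap X.subtype = LinearMap.ker f := by
    ext z
    simp [f, Submodule.mem_orthogonal_singleton_iff_inner_right]
  have hs : Function.Surjective f := by
    refine LinearMap.surjective_of_ne_zero ?_
    intro h
    exact hxy (by simpa [f] using LinearMap.congr_fun h ⟨y, hy⟩)
  rw [hk]
  let e := f.quotKerEquivOfSurjective hs
  exact ⟨e.symm.finiteDimensional, by rw [e.finrank_eq]; simp⟩

lemma not_fd_of_codim {W X : Submodule ℂ H} {n : ℕ} (h : CodimIn W X n)
    (hX : ¬ FiniteDimensional ℂ X) : ¬ FiniteDimensional ℂ W := by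
  intro hW
  obtain ⟨h1, h2, -⟩ := h
  apply hX
  haveI : FiniteDimensional ℂ (W.comap X.subtype) :=
    (Submodule.comapSubtypeEquivOfLe h1).symm.finiteDimensional
  exact Module.Finite.of_submodule_quotient (W.comap X.subtype)

lemma not_fd_mono {W X : Submodule ℂ H} (h : W ≤ X)
    (hW : ¬ FiniteDimensional ℂ W) : ¬ FiniteDimensional ℂ X := by
  intro hX
  exact hW (Submodule.finiteDimensional_of_le h)

lemma codimIn_sup {X : Submodule ℂ H} {z : H} (hz : z ∉ X) : CodimIn X (X ⊔ ℂ ∙ z) 1 := by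
  refine ⟨le_sup_left, ?_⟩
  have hm : z ∈ X ⊔ ℂ ∙ z := le_sup_right (a := X) (Submodule.mem_span_singleton_self z)
  have : finrank ℂ (↥(X ⊔ ℂ ∙ z) ⧸ X.comap (X ⊔ ℂ ∙ z).subtype) = 1 := by
    refine finrank_eq_one (Submodule.Quotient.mk ⟨z, hm⟩) ?_ ?_
    · rw [Ne, Submodule.Quotient.mk_eq_zero]; exact hz
    · intro w
      obtain ⟨⟨w, hw⟩, rfl⟩ := Submodule.Quotient.mk_surjective _ w
      obtain ⟨x, hx, y, hy, rfl⟩ := Submodule.mem_sup.1 hw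
      obtain ⟨c, rfl⟩ := Submodule.mem_span_singleton.1 hy
      refine ⟨c, ?_⟩
      rw [← Submodule.Quotient.mk_smul, Submodule.Quotient.eq]
      simpa using hx
  exact ⟨FiniteDimensional.of_finrank_pos (by omega), this⟩

lemma eq_sup_of_codimIn {X Z : Submodule ℂ H} (h : CodimIn X Z 1) :
    ∃ z, Z ≤ X ⊔ ℂ ∙ z := by
  obtain ⟨h1, h2, h3⟩ := h
  obtain ⟨v, -, hv⟩ := finrank_eq_one_iff'.1 h3
  obtain ⟨z, rfl⟩ := Submodule.Quotient.mk_surjective _ v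
  refine ⟨z, fun w hw => ?_⟩
  obtain ⟨c, hc⟩ := hv (Submodule.Quotient.mk ⟨w, hw⟩)
  rw [← Submodule.Quotient.mk_smul, eq_comm, Submodule.Quotient.eq] at hc
  have hc' : w - c • (z : H) ∈ X := hc
  exact Submodule.mem_sup.2 ⟨_, hc', _, Submodule.smul_mem _ c (Submodule.mem_span_singleton_self _),
    sub_add_cancel _ _⟩

lemma top_Ginf {X M : Submodule ℂ H} (hX : X ∈ Ginf (H := H)) (hM : M ∈ topSet X) :
    M ∈ Ginf (H := H) :=
  ⟨hM.1, not_fd_of_codim hM.2 hX.2.1, not_fd_mono (Submodule.orthogonal_le hM.2.1) hX.2.2⟩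

lemma star_Ginf {X Z : Submodule ℂ H} (hX : X ∈ Ginf (H := H)) (hZ : Z ∈ starSet X) :
    Z ∈ Ginf (H := H) := by
  refine ⟨hZ.1, not_fd_mono hZ.2.1 hX.2.1, ?_⟩
  obtain ⟨z, hz⟩ := eq_sup_of_codimIn hZ.2
  have h1 : Xᗮ ⊓ (ℂ ∙ z)ᗮ ≤ Zᗮ := by
    rw [Submodule.inf_orthogonal]; exact Submodule.orthogonal_le hz
  refine not_fd_mono h1 ?_
  by_cases h : ∃ y ∈ Xᗮ, inner ℂ z y ≠ 0
  · obtain ⟨y, hy, hzy⟩ := h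
    exact not_fd_of_codim (codimIn_orth hy hzy) hX.2.2
  · push Not at h
    refine not_fd_mono (le_inf le_rfl fun y hy => ?_) hX.2.2
    exact Submodule.mem_orthogonal_singleton_iff_inner_right.2 (h y hy)

lemma exists_ne_of_not_fd {X : Submodule ℂ H} (h : ¬ FiniteDimensional ℂ X) :
    ∃ x ∈ X, x ≠ 0 := by
  refine Submodule.exists_mem_ne_zero_of_ne_bot ?_
  rintro rfl
  exact h inferInstance

end helpers

/-- for an `A`-component `C` of `G_∞(H)` and `X ∈ G_∞(H)`, `X` belongs to `C₊₁`
iff the top `G¹(X)` is contained in `C`, and `X` belongs to `C₋₁` iff the star `S(X)` is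
contained in `C`. -/
theorem stmt10 (hH : ¬FiniteDimensional ℂ H)
    (C : Set (Submodule ℂ H)) (hC : IsAComponent C)
    (X : Submodule ℂ H) (hX : X ∈ Ginf (H := H)) :
    ((∃ Y ∈ C, CodimIn Y X 1) ↔ topSet X ⊆ C) ∧
    ((∃ Y ∈ C, CodimIn X Y 1) ↔ starSet X ⊆ C) := by
  have eqc : ∀ {A B D E : Submodule ℂ H}, CodimIn A B 1 → CodimIn D E 1 →
      cdl A B = cdl D E ∧ cdl A B ≠ ⊤ := by
    intro A B D E h1 h2
    rw [((codimIn_iff _ _ _).1 h1).2, ((codimIn_iff _ _ _).1 h2).2]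
    simp
  refine ⟨⟨?_, ?_⟩, ?_, ?_⟩
  · rintro ⟨Y, hY, hYX⟩ M hM
    obtain ⟨e, f⟩ := eqc hYX hM.2
    exact mem_of_same hC hY (top_Ginf hX hM) (same_of_upper hYX.1 hM.2.1 e f)
  · intro h
    obtain ⟨x, hx, hx0⟩ := exists_ne_of_not_fd hX.2.1
    have hc : CodimIn (X ⊓ (ℂ ∙ x)ᗮ) X 1 := codimIn_orth hx (inner_self_ne_zero.2 hx0)
    exact ⟨_, h ⟨hX.1.inter (Submodule.isClosed_orthogonal _), hc⟩, hc⟩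
  · rintro ⟨Y, hY, hXY⟩ Z hZ
    obtain ⟨e, f⟩ := eqc hXY hZ.2
    exact mem_of_same hC hY (star_Ginf hX hZ) (same_of_lower hXY.1 hZ.2.1 e f)
  · intro h
    obtain ⟨z, hz, hz0⟩ := exists_ne_of_not_fd hX.2.2
    have hzX : z ∉ X := fun hzX => hz0 (inner_self_eq_zero.1 (hz z hzX))
    have hc := codimIn_sup hzX
    exact ⟨_, h ⟨Submodule.isClosed_sup_finiteDimensional _ _ hX.1, hc⟩, hc⟩
end

section
/- Let f be a bijective transformation of G_∞(H) which preserves the ortho-adjacency relation in both directions, and let X, X' ∈ G_∞(H) be such that f maps the top G^1(X) onto the top G^1(X'). Then there exists a unitary or anti-unitary operator U_X : X → X' (a surjective linear or conjugate-linear isometry from X onto X') such that f(M) = U_X(M) for every M ∈ G^1(X). -/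
open Module Submodule Classical

variable {H : Type*} [NormedAddCommGroup H] [InnerProductSpace ℂ H] [CompleteSpace H]

theorem uh_sigma (σ : ℂ →+* ℂ) (h : ∀ a, σ (starRingEnd ℂ a) = starRingEnd ℂ (σ a)) :
    σ = RingHom.id ℂ ∨ σ = starRingEnd ℂ := by
  have hre : ∀ r : ℝ, ((σ (r : ℂ)).re : ℂ) = σ r := by
    intro r
    have := h r
    rw [Complex.conj_ofReal] at this
    exact Complex.conj_eq_iff_re.1 this.symm
  let ρ : ℝ →+* ℝ :=
    { toFun := fun r => (σ (r : ℂ)).re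
      map_one' := by simp
      map_zero' := by simp
      map_add' := by intro a b; simp
      map_mul' := by
        intro a b
        have : ((σ ((a * b : ℝ) : ℂ)).re : ℂ) = ((σ (a : ℂ)).re * (σ (b : ℂ)).re : ℝ) := by
          rw [hre]; push_cast; rw [hre, hre, map_mul]
        exact_mod_cast this }
  have hρ : ρ = RingHom.id ℝ := Subsingleton.elim _ _
  have hr : ∀ r : ℝ, σ (r : ℂ) = r := by
    intro r
    rw [← hre r]
    have : ρ r = r := by rw [hρ]; rfl
    exact congrArg _ this
  let τ : ℂ →ₐ[ℝ] ℂ := { σ with commutes' := hr }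
  rcases Complex.real_algHom_eq_id_or_conj τ with h | h
  · left; ext a; exact DFunLike.congr_fun h a
  · right; ext a; exact DFunLike.congr_fun h a

section
variable {E F : Type*} [NormedAddCommGroup E] [InnerProductSpace ℂ E]
  [NormedAddCommGroup F] [InnerProductSpace ℂ F]

open scoped InnerProductSpace

theorem uh_span (g : E → F) (hg : ∀ x y, ⟪x, y⟫_ℂ = 0 ↔ ⟪g x, g y⟫_ℂ = 0)
    (hs : ∀ w : F, w ≠ 0 → ∃ x, ∃ c : ℂ, c ≠ 0 ∧ g x = c • w) (a b x : E)
    (h : ∀ z, ⟪z, a⟫_ℂ = 0 → ⟪z, b⟫_ℂ = 0 → ⟪z, x⟫_ℂ = 0) :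
    ∃ α β : ℂ, g x = α • g a + β • g b := by
  have : g x ∈ Submodule.span ℂ {g a, g b} := by
    haveI : FiniteDimensional ℂ (Submodule.span ℂ {g a, g b}) :=
      FiniteDimensional.span_of_finite ℂ (Set.toFinite _)
    haveI : CompleteSpace (Submodule.span ℂ {g a, g b}) := FiniteDimensional.complete ℂ _
    rw [← Submodule.orthogonal_orthogonal (Submodule.span ℂ {g a, g b})]
    rw [Submodule.mem_orthogonal]
    intro u hu
    by_cases hu0 : u = 0
    · simp [hu0]
    obtain ⟨z, c, hc, hz⟩ := hs u hu0
    rw [Submodule.mem_orthogonal'] at hu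
    have h1 := hu (g a) (Submodule.subset_span (by simp))
    have h2 := hu (g b) (Submodule.subset_span (by simp))
    have h3 := h z ((hg _ _).2 (by simp [hz, inner_smul_left, h1]))
      ((hg _ _).2 (by simp [hz, inner_smul_left, h2]))
    have h4 := (hg _ _).1 h3
    rw [hz, inner_smul_left] at h4
    simpa [hc] using h4
  obtain ⟨α, β, h⟩ := Submodule.mem_span_pair.1 this
  exact ⟨α, β, h.symm⟩

theorem uh_core (hd : ∀ x y z : E, ∃ w : E, w ≠ 0 ∧ ⟪x, w⟫_ℂ = 0 ∧ ⟪y, w⟫_ℂ = 0 ∧ ⟪z, w⟫_ℂ = 0)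
    (g : E → F) (hg : ∀ x y, ⟪x, y⟫_ℂ = 0 ↔ ⟪g x, g y⟫_ℂ = 0)
    (hs : ∀ w : F, w ≠ 0 → ∃ x, ∃ c : ℂ, c ≠ 0 ∧ g x = c • w) :
    ∃ σ : ℂ →+* ℂ, (σ = RingHom.id ℂ ∨ σ = starRingEnd ℂ) ∧ ∃ U : E → F,
      (∀ x y, U (x + y) = U x + U y) ∧ (∀ (c : ℂ) x, U (c • x) = σ c • U x) ∧
      (∀ x, ‖U x‖ = ‖x‖) ∧ Function.Surjective U ∧ ∀ x, ∃ c : ℂ, c ≠ 0 ∧ g x = c • U x := by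
  have g0 : ∀ x, g x = 0 ↔ x = 0 := by
    intro x
    rw [← inner_self_eq_zero (𝕜 := ℂ), ← hg, inner_self_eq_zero]
  have hsp : ∀ (a b : E) (s t : ℂ), ∃ α β : ℂ, g (s • a + t • b) = α • g a + β • g b := by
    intro a b s t
    apply uh_span g hg hs
    intro z h1 h2
    simp [inner_add_right, inner_smul_right, h1, h2]
  have hgs : ∀ (a : E) (s : ℂ), ∃ α : ℂ, g (s • a) = α • g a := by
    intro a s
    obtain ⟨α, β, h⟩ := hsp a a s 0
    refine ⟨α + β, ?_⟩
    rw [add_smul, ← h]; simp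
  -- base vector
  obtain ⟨e₁, he₁, -⟩ := hd 0 0 0
  obtain ⟨e, he⟩ : ∃ e : E, ⟪e, e⟫_ℂ = 1 := by
    refine ⟨((‖e₁‖ : ℂ)⁻¹) • e₁, ?_⟩
    rw [inner_self_eq_norm_sq_to_K, norm_smul]
    have : ‖e₁‖ ≠ 0 := by simpa using he₁
    simp [this]
  have he0 : e ≠ 0 := by rintro rfl; simp at he
  have hge0 : ‖g e‖ ≠ 0 := by simpa [g0] using he0
  obtain ⟨e', c₀, hc₀, hce, he'⟩ : ∃ e' : F, ∃ c : ℂ, c ≠ 0 ∧ g e = c • e' ∧ ⟪e', e'⟫_ℂ = 1 := by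
    refine ⟨((‖g e‖ : ℂ)⁻¹) • g e, ‖g e‖, by exact_mod_cast hge0, ?_, ?_⟩
    · rw [smul_smul, mul_inv_cancel₀ (by exact_mod_cast hge0), one_smul]
    · rw [inner_self_eq_norm_sq_to_K, norm_smul]
      simp [hge0]
  have hee : ∀ x, ⟪e, x⟫_ℂ = 0 ↔ ⟪e', g x⟫_ℂ = 0 := by
    intro x; rw [hg, hce, inner_smul_left]; simp [hc₀]
  -- T
  obtain ⟨T, hT⟩ : ∃ T : E → F, ∀ y, ⟪e, y⟫_ℂ = 0 → ⟪e', T y⟫_ℂ = 0 ∧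
      ∃ c : ℂ, c ≠ 0 ∧ g (e + y) = c • (e' + T y) := by
    refine ⟨fun y => (⟪e', g (e + y)⟫_ℂ)⁻¹ • g (e + y) - e', fun y hy => ?_⟩
    have h1 : ⟪e', g (e + y)⟫_ℂ ≠ 0 := by
      intro h
      rw [← hee, inner_add_right, he, hy] at h
      simp at h
    refine ⟨?_, ⟪e', g (e + y)⟫_ℂ, h1, ?_⟩
    · simp only [inner_sub_right, inner_smul_right, he']
      rw [inv_mul_cancel₀ h1, sub_self]
    · rw [add_sub_cancel, smul_smul, mul_inv_cancel₀ h1, one_smul]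
  have hT1 : ∀ y, ⟪e, y⟫_ℂ = 0 → ⟪e', T y⟫_ℂ = 0 := fun y hy => (hT y hy).1
  have hT1' : ∀ y, ⟪e, y⟫_ℂ = 0 → ⟪T y, e'⟫_ℂ = 0 := fun y hy => inner_eq_zero_symm.1 (hT y hy).1
  have hsm : ∀ (s : ℂ) y, ⟪e, y⟫_ℂ = 0 → ⟪e, s • y⟫_ℂ = 0 := by
    intro s y h; rw [inner_smul_right, h, mul_zero]
  have had : ∀ x y, ⟪e, x⟫_ℂ = 0 → ⟪e, y⟫_ℂ = 0 → ⟪e, x + y⟫_ℂ = 0 := by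
    intro x y h h'; rw [inner_add_right, h, h', add_zero]
  have hT2 : ∀ y, ⟪e, y⟫_ℂ = 0 → ∃ c : ℂ, c ≠ 0 ∧ g (e + y) = c • (e' + T y) := fun y hy => (hT y hy).2
  have hTm : ∀ y z, ⟪e, y⟫_ℂ = 0 → ⟪e, z⟫_ℂ = 0 → (⟪y, z⟫_ℂ = -1 ↔ ⟪T y, T z⟫_ℂ = -1) := by
    intro y z hy hz
    obtain ⟨c, hc, h1⟩ := hT2 y hy
    obtain ⟨d, hd, h2⟩ := hT2 z hz
    have h3 := hg (e + y) (e + z)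
    rw [h1, h2] at h3
    simp only [inner_add_left, inner_add_right, inner_smul_left, inner_smul_right, he, hz,
      inner_eq_zero_symm.1 hy, he', hT1 z hz, hT1' y hy, mul_eq_zero, map_eq_zero, hc, hd,
      false_or, add_zero, zero_add] at h3
    rw [← mul_add, mul_eq_zero, map_eq_zero] at h3
    simp only [hc, false_or] at h3
    rw [eq_neg_iff_add_eq_zero, eq_neg_iff_add_eq_zero, add_comm, h3, add_comm]
  have hgT : ∀ y, ⟪e, y⟫_ℂ = 0 → ∃ c : ℂ, c ≠ 0 ∧ g y = c • T y := by
    intro y hy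
    obtain ⟨c, hc, h1⟩ := hT2 y hy
    obtain ⟨α, β, h⟩ := hsp (e + y) e 1 (-1)
    have h2 : (1 : ℂ) • (e + y) + (-1 : ℂ) • e = y := by simp
    rw [h2, h1, hce] at h
    have h3 := (hee y).1 hy
    rw [h] at h3
    simp only [inner_add_right, inner_smul_right, he', hT1 y hy] at h3
    have h4 : g y = (α * c) • T y := by
      have : α * c + β * c₀ = 0 := by linear_combination h3
      calc g y = (α * c + β * c₀) • e' + (α * c) • T y := by rw [h]; module
        _ = _ := by rw [this]; simp
    by_cases h5 : α * c = 0
    · have : y = 0 := by rw [← g0, h4, h5, zero_smul]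
      subst this
      rw [add_zero, hce, smul_add] at h1
      have h6 : ⟪T 0, T 0⟫_ℂ = 0 := by
        have := congrArg (fun v => ⟪T 0, v⟫_ℂ) h1
        simp only [inner_add_right, inner_smul_right, hT1' 0 hy] at this
        simpa [hc] using this.symm
      rw [inner_self_eq_zero] at h6
      exact ⟨1, one_ne_zero, by rw [h6, smul_zero, g0]⟩
    · exact ⟨_, h5, h4⟩
  have hT0 : ∀ y, ⟪e, y⟫_ℂ = 0 → (T y = 0 ↔ y = 0) := by
    intro y hy
    obtain ⟨c, hc, h⟩ := hgT y hy
    rw [← g0 y, h]; simp [hc]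
  have hTo : ∀ y z, ⟪e, y⟫_ℂ = 0 → ⟪e, z⟫_ℂ = 0 → (⟪y, z⟫_ℂ = 0 ↔ ⟪T y, T z⟫_ℂ = 0) := by
    intro y z hy hz
    obtain ⟨c, hc, h1⟩ := hgT y hy
    obtain ⟨d, hd, h2⟩ := hgT z hz
    rw [hg, h1, h2, inner_smul_left, inner_smul_right]
    simp [hc, hd]
  -- orthogonal to the same things
  have hpar : ∀ y z, ⟪e, y⟫_ℂ = 0 → ⟪e, z⟫_ℂ = 0 → ∀ δ : ℂ, T z = δ • T y → ∃ δ' : ℂ, z = δ' • y := by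
    intro y z hy hz δ h
    by_cases hy0 : y = 0
    · subst hy0
      rw [(hT0 _ hy).2 rfl, smul_zero, hT0 _ hz] at h
      exact ⟨0, by simp [h]⟩
    have hyy : ⟪y, y⟫_ℂ ≠ 0 := by simpa using hy0
    set u := z - (⟪y, z⟫_ℂ / ⟪y, y⟫_ℂ) • y with hu
    have heu : ⟪e, u⟫_ℂ = 0 := by simp [hu, inner_sub_right, inner_smul_right, hy, hz]
    have hyu : ⟪y, u⟫_ℂ = 0 := by
      simp only [hu, inner_sub_right, inner_smul_right]
      field_simp; ring
    have huy := inner_eq_zero_symm.1 hyu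
    have h1 := (hTo u y heu hy).1 huy
    have h2 : ⟪u, z⟫_ℂ = 0 := (hTo u z heu hz).2 (by rw [h, inner_smul_right, h1, mul_zero])
    have h3 : ⟪u, u⟫_ℂ = 0 := by
      conv_lhs => rw [hu]
      rw [← hu, inner_sub_right, inner_smul_right, h2, huy]; simp
    rw [inner_self_eq_zero, hu, sub_eq_zero] at h3
    exact ⟨_, h3⟩
  have hhalf : ∀ y z, ⟪e, y⟫_ℂ = 0 → ⟪e, z⟫_ℂ = 0 → ∃ β : ℂ, T (y + z) = T y + β • T z := by
    intro y z hy hz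
    obtain ⟨α, β, h⟩ := hsp (e + y) z 1 1
    have h2 : (1 : ℂ) • (e + y) + (1 : ℂ) • z = e + (y + z) := by simp [add_assoc]
    obtain ⟨c, hc, h3⟩ := hT2 y hy
    obtain ⟨d, hd, h4⟩ := hT2 (y + z) (had y z hy hz)
    obtain ⟨k, hk, h5⟩ := hgT z hz
    rw [h2, h3, h4, h5] at h
    have h6 := congrArg (fun v => ⟪e', v⟫_ℂ) h
    simp only [inner_add_right, inner_smul_right, hT1 _ (had y z hy hz), hT1 y hy, hT1 z hz, he'] at h6
    have h7 : d = α * c := by linear_combination h6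
    have h8 : d • T (y + z) = d • T y + (β * k) • T z := by
      have : d • T (y + z) = d • (e' + T (y + z)) - d • e' := by module
      rw [this, h, h7]; module
    refine ⟨d⁻¹ * (β * k), ?_⟩
    calc T (y + z) = d⁻¹ • (d • T (y + z)) := by rw [smul_smul, inv_mul_cancel₀ hd, one_smul]
      _ = _ := by rw [h8, smul_add, smul_smul, smul_smul, inv_mul_cancel₀ hd, one_smul]
  have haddi : ∀ y z, ⟪e, y⟫_ℂ = 0 → ⟪e, z⟫_ℂ = 0 → (∀ δ : ℂ, z ≠ δ • y) → T (y + z) = T y + T z := by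
    intro y z hy hz hyz
    obtain ⟨β, h1⟩ := hhalf y z hy hz
    obtain ⟨γ, h2⟩ := hhalf z y hz hy
    rw [add_comm z y] at h2
    have h3 : (1 - β) • T z = (1 - γ) • T y := by
      have : T y + β • T z = T z + γ • T y := by rw [← h1, h2]
      have h4 : T z - β • T z = T y - γ • T y := by
        rw [sub_eq_sub_iff_add_eq_add, ← this, add_comm]
      rw [sub_smul, sub_smul, one_smul, one_smul, h4]
    by_cases hβ : 1 - β = 0
    · have : β = 1 := by linear_combination -hβ
      rw [h1, this, one_smul]
    · exfalso
      obtain ⟨δ', h⟩ := hpar y z hy hz ((1 - β)⁻¹ * (1 - γ)) (by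
        rw [mul_smul, ← h3, smul_smul, inv_mul_cancel₀ hβ, one_smul])
      exact hyz _ h
  have hTz : T 0 = 0 := (hT0 0 (by simp)).2 rfl
  have hadd : ∀ y z, ⟪e, y⟫_ℂ = 0 → ⟪e, z⟫_ℂ = 0 → T (y + z) = T y + T z := by
    intro y z hy hz
    by_cases h : ∀ δ : ℂ, z ≠ δ • y
    · exact haddi y z hy hz h
    push Not at h
    obtain ⟨δ, rfl⟩ := h
    by_cases hδ : δ • y = 0
    · rw [hδ, hTz, add_zero, add_zero]
    have hyn : y ≠ 0 := by rintro rfl; simp at hδ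
    obtain ⟨w, hw0, hew, hyw, -⟩ := hd e y 0
    have hni : ∀ s t : ℂ, w + s • y ≠ t • y := by
      intro s t hh
      have h1 : w = (t - s) • y := by rw [sub_smul, ← hh]; abel
      have h2 : ⟪w, w⟫_ℂ = 0 := by
        conv_lhs => rw [h1]
        rw [inner_smul_left, ← h1, hyw, mul_zero]
      exact hw0 (inner_self_eq_zero.1 h2)
    have e1 : T (y + w) = T y + T w := haddi y w hy hew (fun t => by simpa using hni 0 t)
    have e2 : T (δ • y + (y + w)) = T (δ • y) + T (y + w) :=
      haddi _ _ hz (had _ _ hy hew) (fun t => by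
        have := hni 1 (t * δ)
        rwa [one_smul, add_comm w y, mul_smul] at this)
    have e3 : T ((y + δ • y) + w) = T (y + δ • y) + T w :=
      haddi _ _ (had _ _ hy hz) hew (fun t => by
        have := hni 0 (t * (1 + δ))
        rw [zero_smul, add_zero, mul_smul, add_smul, one_smul] at this
        exact this)
    have e4 : δ • y + (y + w) = (y + δ • y) + w := by abel
    rw [e4, e3, e1] at e2
    have : T (y + δ • y) + T w = (T y + T (δ • y)) + T w := by rw [e2]; abel
    exact add_right_cancel this
  -- scalars
  have hsc : ∀ (s : ℂ) y, ⟪e, y⟫_ℂ = 0 → ∃ t : ℂ, T (s • y) = t • T y := by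
    intro s y hy
    obtain ⟨α, h⟩ := hgs y s
    obtain ⟨c, hc, h1⟩ := hgT y hy
    obtain ⟨d, hd, h2⟩ := hgT (s • y) (hsm s y hy)
    refine ⟨d⁻¹ * (α * c), ?_⟩
    rw [h1, h2, smul_smul] at h
    rw [mul_smul, ← h, smul_smul, inv_mul_cancel₀ hd, one_smul]
  have hso : ∀ (s t : ℂ) y w, ⟪e, y⟫_ℂ = 0 → ⟪e, w⟫_ℂ = 0 → y ≠ 0 → ⟪y, w⟫_ℂ = 0 →
      T (s • y) = t • T y → T (s • w) = t • T w := by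
    intro s t y w hy hw hy0 hyw h
    obtain ⟨t', h'⟩ := hsc s w hw
    obtain ⟨r, hr⟩ := hsc s (y + w) (had _ _ hy hw)
    rw [smul_add, hadd _ _ (hsm _ _ hy) (hsm _ _ hw), hadd _ _ hy hw, h, h'] at hr
    have hTT := (hTo y w hy hw).1 hyw
    have h1 := congrArg (fun v => ⟪T y, v⟫_ℂ) hr
    have h2 := congrArg (fun v => ⟪T w, v⟫_ℂ) hr
    simp only [inner_add_right, inner_smul_right, hTT, inner_eq_zero_symm.1 hTT] at h1 h2
    have hn : ⟪T y, T y⟫_ℂ ≠ 0 := by rw [Ne, inner_self_eq_zero, hT0 y hy]; exact hy0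
    have h3 : t = r := by
      apply mul_right_cancel₀ hn; linear_combination h1
    have h4 : t' • T w = r • T w := by
      by_cases hw0 : T w = 0
      · simp [hw0]
      · have : t' = r := by
          apply mul_right_cancel₀ (inner_self_ne_zero (𝕜 := ℂ).2 hw0); linear_combination h2
        rw [this]
    rw [h', h4, h3]
  obtain ⟨e₂, he₂, hee₂, -⟩ := hd e 0 0
  have hex : ∀ s : ℂ, ∃ t : ℂ, ∀ y, ⟪e, y⟫_ℂ = 0 → T (s • y) = t • T y := by
    intro s
    obtain ⟨t, ht⟩ := hsc s e₂ hee₂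
    refine ⟨t, fun y hy => ?_⟩
    obtain ⟨w, hw0, h1, h2, h3⟩ := hd e e₂ y
    exact hso s t w y h1 hy hw0 (inner_eq_zero_symm.1 h3) (hso s t e₂ w hee₂ h1 he₂ h2 ht)
  choose σf hσ using hex
  have hTe₂ : T e₂ ≠ 0 := fun h => he₂ ((hT0 _ hee₂).1 h)
  have hcan : ∀ a b : ℂ, a • T e₂ = b • T e₂ → a = b := fun a b h => smul_left_injective ℂ hTe₂ h
  let σ : ℂ →+* ℂ :=
    { toFun := σf
      map_one' := hcan _ _ (by rw [← hσ _ _ hee₂]; simp)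
      map_zero' := hcan _ _ (by rw [← hσ _ _ hee₂]; simp [hTz])
      map_add' := fun a b => hcan _ _ (by
        rw [← hσ _ _ hee₂, add_smul, add_smul, hadd _ _ (hsm _ _ hee₂) (hsm _ _ hee₂),
          hσ _ _ hee₂, hσ _ _ hee₂])
      map_mul' := fun a b => hcan _ _ (by
        rw [← hσ _ _ hee₂, mul_smul, mul_smul, hσ _ _ (hsm _ _ hee₂), hσ _ _ hee₂]) }
  have hσ' : ∀ (s : ℂ) y, ⟪e, y⟫_ℂ = 0 → T (s • y) = σ s • T y := hσ
  have hin : ∀ y z, ⟪e, y⟫_ℂ = 0 → ⟪e, z⟫_ℂ = 0 → ⟪T y, T z⟫_ℂ = σ ⟪y, z⟫_ℂ := by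
    intro y z hy hz
    by_cases h : ⟪y, z⟫_ℂ = 0
    · rw [h, map_zero]; exact (hTo y z hy hz).1 h
    have h1 := (hTm y ((-(⟪y, z⟫_ℂ)⁻¹) • z) hy (hsm _ _ hz)).1 (by
      rw [inner_smul_right, neg_mul, inv_mul_cancel₀ h])
    rw [hσ' _ _ hz, inner_smul_right, map_neg, map_inv₀] at h1
    have h2 : σ ⟪y, z⟫_ℂ ≠ 0 := by simpa using h
    field_simp at h1
    linear_combination -h1
  have hconj : ∀ a, σ (starRingEnd ℂ a) = starRingEnd ℂ (σ a) := by
    intro a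
    have hn : ⟪e₂, e₂⟫_ℂ ≠ 0 := by simpa using he₂
    have h1 := hin e₂ ((a / ⟪e₂, e₂⟫_ℂ) • e₂) hee₂ (hsm _ _ hee₂)
    have h2 := hin ((a / ⟪e₂, e₂⟫_ℂ) • e₂) e₂ (hsm _ _ hee₂) hee₂
    rw [← inner_conj_symm, h1, ← inner_conj_symm (𝕜 := ℂ) ((a / _) • e₂) e₂, inner_smul_right,
      div_mul_cancel₀ _ hn] at h2
    exact h2.symm
  have hcase := uh_sigma σ hconj
  have hsurj : Function.Surjective σ := by
    rcases hcase with h | h <;> rw [h]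
    · exact fun a => ⟨a, rfl⟩
    · exact fun a => ⟨starRingEnd ℂ a, by simp⟩
  have hreal : ∀ r : ℝ, σ (r : ℂ) = r := by
    rcases hcase with h | h <;> rw [h] <;> simp
  have hTsurj : ∀ w, ⟪e', w⟫_ℂ = 0 → ∃ y, ⟪e, y⟫_ℂ = 0 ∧ T y = w := by
    intro w hw
    obtain ⟨x, c, hc, hx⟩ := hs (e' + w) (by
      intro h
      have := congrArg (fun v => ⟪e', v⟫_ℂ) h
      simp only [inner_add_right, hw, he', inner_zero_right, add_zero] at this
      exact one_ne_zero this)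
    have hex : ⟪e, x⟫_ℂ ≠ 0 := by
      rw [Ne, hee, hx, inner_smul_right, inner_add_right, he', hw]
      simpa using hc
    set y := (⟪e, x⟫_ℂ)⁻¹ • x - e with hy
    have hey : ⟪e, y⟫_ℂ = 0 := by
      rw [hy, inner_sub_right, inner_smul_right, he, inv_mul_cancel₀ hex, sub_self]
    obtain ⟨d, hd, h1⟩ := hT2 y hey
    obtain ⟨α, h2⟩ := hgs x (⟪e, x⟫_ℂ)⁻¹
    have h3 : e + y = (⟪e, x⟫_ℂ)⁻¹ • x := by rw [hy]; abel
    rw [h3, h2, hx] at h1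
    refine ⟨y, hey, ?_⟩
    have h4 := congrArg (fun v => ⟪e', v⟫_ℂ) h1
    simp only [inner_add_right, inner_smul_right, he', hw, hT1 y hey] at h4
    have h5 : α * c = d := by linear_combination h4
    rw [smul_smul, h5] at h1
    exact (add_left_cancel (smul_right_injective F hd h1)).symm
  -- the operator
  have hP : ∀ x, ⟪e, x - ⟪e, x⟫_ℂ • e⟫_ℂ = 0 := by
    intro x; rw [inner_sub_right, inner_smul_right, he, mul_one, sub_self]
  let U : E → F := fun x => σ ⟪e, x⟫_ℂ • e' + T (x - ⟪e, x⟫_ℂ • e)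
  have hU : ∀ (a : ℂ) y, ⟪e, y⟫_ℂ = 0 → U (a • e + y) = σ a • e' + T y := by
    intro a y hy
    have h1 : ⟪e, a • e + y⟫_ℂ = a := by rw [inner_add_right, inner_smul_right, he, hy]; simp
    simp only [U, h1, add_sub_cancel_left]
  have hdec : ∀ x, ∃ (a : ℂ) (y : E), ⟪e, y⟫_ℂ = 0 ∧ x = a • e + y := fun x =>
    ⟨⟪e, x⟫_ℂ, x - ⟪e, x⟫_ℂ • e, hP x, by abel⟩
  refine ⟨σ, hcase, U, ?_, ?_, ?_, ?_, ?_⟩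
  · intro x z
    obtain ⟨a, y, hy, rfl⟩ := hdec x
    obtain ⟨b, t, ht, rfl⟩ := hdec z
    have : a • e + y + (b • e + t) = (a + b) • e + (y + t) := by module
    rw [this, hU _ _ (had _ _ hy ht), hU _ _ hy, hU _ _ ht, hadd _ _ hy ht, map_add]
    module
  · intro c x
    obtain ⟨a, y, hy, rfl⟩ := hdec x
    have : c • (a • e + y) = (c * a) • e + c • y := by module
    rw [this, hU _ _ (hsm _ _ hy), hU _ _ hy, hσ' _ _ hy, map_mul]
    module
  · intro x
    obtain ⟨a, y, hy, rfl⟩ := hdec x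
    rw [hU _ _ hy]
    have h1 : ⟪σ a • e' + T y, σ a • e' + T y⟫_ℂ = σ ⟪a • e + y, a • e + y⟫_ℂ := by
      simp only [inner_add_left, inner_add_right, inner_smul_left, inner_smul_right, he, he', hy,
        inner_eq_zero_symm.1 hy, hT1 y hy, hT1' y hy, hin y y hy hy, map_add, map_mul, map_zero,
        map_one, hconj]
    rw [inner_self_eq_norm_sq_to_K, inner_self_eq_norm_sq_to_K] at h1
    have h2 : σ ((‖a • e + y‖ : ℂ) ^ 2) = (‖a • e + y‖ : ℂ) ^ 2 := by rw [map_pow, hreal]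
    have h3 : (‖σ a • e' + T y‖ : ℂ) ^ 2 = (‖a • e + y‖ : ℂ) ^ 2 := h1.trans h2
    have h4 : ‖σ a • e' + T y‖ ^ 2 = ‖a • e + y‖ ^ 2 := by exact_mod_cast h3
    exact (sq_eq_sq₀ (norm_nonneg _) (norm_nonneg _)).1 h4
  · intro w
    obtain ⟨a, ha⟩ := hsurj ⟪e', w⟫_ℂ
    obtain ⟨y, hy, hyw⟩ := hTsurj (w - ⟪e', w⟫_ℂ • e') (by
      rw [inner_sub_right, inner_smul_right, he', mul_one, sub_self])
    refine ⟨a • e + y, ?_⟩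
    rw [hU _ _ hy, ha, hyw]; abel
  · intro x
    obtain ⟨a, y, hy, rfl⟩ := hdec x
    rw [hU _ _ hy]
    by_cases ha : a = 0
    · subst ha
      simpa using hgT y hy
    obtain ⟨d, hd, h1⟩ := hT2 (a⁻¹ • y) (hsm _ _ hy)
    obtain ⟨α, h2⟩ := hgs (e + a⁻¹ • y) a
    have h3 : a • (e + a⁻¹ • y) = a • e + y := by
      rw [smul_add, smul_smul, mul_inv_cancel₀ ha, one_smul]
    rw [h3] at h2
    have hσa : σ a ≠ 0 := by simpa using ha
    have h4 : e' + T (a⁻¹ • y) = (σ a)⁻¹ • (σ a • e' + T y) := by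
      rw [hσ' _ _ hy, map_inv₀, smul_add, smul_smul, inv_mul_cancel₀ hσa, one_smul]
    refine ⟨α * d * (σ a)⁻¹, ?_, ?_⟩
    · refine mul_ne_zero (mul_ne_zero ?_ hd) (inv_ne_zero hσa)
      rintro rfl
      rw [zero_smul, g0] at h2
      have := congrArg (fun v => ⟪e, v⟫_ℂ) h2
      simp only [inner_add_right, inner_smul_right, he, hy, inner_zero_right] at this
      apply ha; linear_combination this
    · rw [h2, h1, h4]; module
end
section
open scoped InnerProductSpace

theorem codim_iff (W X : Submodule ℂ H) : CodimIn W X 1 ↔ W ⋖ X := by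
  constructor
  · rintro ⟨h1, -, h3⟩
    rw [covBy_iff_quot_is_simple h1, isSimpleModule_iff_finrank_eq_one]
    exact h3
  · intro h
    have h3 := h
    rw [covBy_iff_quot_is_simple h.le, isSimpleModule_iff_finrank_eq_one] at h3
    exact ⟨h.le, Module.finite_of_finrank_pos (by rw [h3]; norm_num), h3⟩

/-- hyperplane of `X` orthogonal to `x` -/
noncomputable def hyp (X : Submodule ℂ H) (x : H) : Submodule ℂ H := X ⊓ (ℂ ∙ x)ᗮ

theorem mem_hyp {X : Submodule ℂ H} {x u : H} : u ∈ hyp X x ↔ u ∈ X ∧ ⟪x, u⟫_ℂ = 0 := by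
  rw [hyp, Submodule.mem_inf, Submodule.mem_orthogonal_singleton_iff_inner_right]

theorem hyp_closed {X : Submodule ℂ H} (hX : IsClosed (X : Set H)) (x : H) :
    IsClosed (hyp X x : Set H) := by
  rw [hyp, Submodule.coe_inf]
  exact hX.inter (Submodule.isClosed_orthogonal _)

theorem hyp_cov {X : Submodule ℂ H} {x : H} (hx : x ∈ X) (hx0 : x ≠ 0) : hyp X x ⋖ X := by
  have hxx : ⟪x, x⟫_ℂ ≠ 0 := inner_self_ne_zero.2 hx0
  refine ⟨lt_of_le_of_ne inf_le_left ?_, ?_⟩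
  · intro h
    rw [← h, mem_hyp] at hx
    exact hxx hx.2
  · intro Y h1 h2
    obtain ⟨v, hv, hv'⟩ := SetLike.exists_of_lt h1
    have hvX := h2.le hv
    have hxv : ⟪x, v⟫_ℂ ≠ 0 := fun h => hv' (mem_hyp.2 ⟨hvX, h⟩)
    apply h2.not_ge
    intro u hu
    have h3 : u - (⟪x, u⟫_ℂ / ⟪x, v⟫_ℂ) • v ∈ hyp X x := by
      refine mem_hyp.2 ⟨X.sub_mem hu (X.smul_mem _ hvX), ?_⟩
      rw [inner_sub_right, inner_smul_right, div_mul_cancel₀ _ hxv, sub_self]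
    have := Y.add_mem (h1.le h3) (Y.smul_mem (⟪x, u⟫_ℂ / ⟪x, v⟫_ℂ) hv)
    rwa [sub_add_cancel] at this

theorem top_iff {X : Submodule ℂ H} (hX : IsClosed (X : Set H)) (M : Submodule ℂ H) :
    M ∈ topSet X ↔ ∃ x ∈ X, x ≠ 0 ∧ M = hyp X x := by
  constructor
  · rintro ⟨h1, h2⟩
    rw [codim_iff] at h2
    haveI : CompleteSpace M := h1.completeSpace_coe
    obtain ⟨v, hv, hv'⟩ := SetLike.exists_of_lt h2.lt
    obtain ⟨y, hy, z, hz, rfl⟩ := Submodule.exists_add_mem_mem_orthogonal (K := M) v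
    have hzX : z ∈ X := by
      have := X.sub_mem hv (h2.le hy)
      rwa [add_sub_cancel_left] at this
    have hz0 : z ≠ 0 := by rintro rfl; exact hv' (by simpa using hy)
    refine ⟨z, hzX, hz0, ?_⟩
    have hle : M ≤ hyp X z := by
      intro m hm
      exact mem_hyp.2 ⟨h2.le hm, (Submodule.mem_orthogonal' _ _).1 hz m hm⟩
    by_contra hne
    exact h2.2 (lt_of_le_of_ne hle hne) (hyp_cov hzX hz0).lt
  · rintro ⟨x, hx, hx0, rfl⟩
    exact ⟨hyp_closed hX x, (codim_iff _ _).2 (hyp_cov hx hx0)⟩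

theorem hyp_ginf {X : Submodule ℂ H} (hX : X ∈ Ginf (H := H)) (x : H) :
    hyp X x ∈ Ginf (H := H) := by
  obtain ⟨h1, h2, h3⟩ := hX
  haveI : CompleteSpace X := h1.completeSpace_coe
  refine ⟨hyp_closed h1 x, ?_, ?_⟩
  · intro hfd
    apply h2
    let p : H := X.starProjection x
    have hp : ∀ u ∈ X, ⟪x, u⟫_ℂ = ⟪p, u⟫_ℂ := by
      intro u hu
      have := Submodule.starProjection_inner_eq_zero (K := X) x u hu
      rw [inner_sub_left, sub_eq_zero] at this
      exact this
    have : X ≤ hyp X x ⊔ (ℂ ∙ p) := by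
      intro u hu
      by_cases hp0 : p = 0
      · exact Submodule.mem_sup_left (mem_hyp.2 ⟨hu, by rw [hp u hu, hp0, inner_zero_left]⟩)
      have hpX : p ∈ X := Submodule.starProjection_apply_mem X x
      have hpp : ⟪p, p⟫_ℂ ≠ 0 := inner_self_ne_zero.2 hp0
      rw [Submodule.mem_sup]
      refine ⟨u - (⟪p, u⟫_ℂ / ⟪p, p⟫_ℂ) • p, mem_hyp.2 ⟨X.sub_mem hu (X.smul_mem _ hpX), ?_⟩,
        (⟪p, u⟫_ℂ / ⟪p, p⟫_ℂ) • p, Submodule.smul_mem _ _ (Submodule.mem_span_singleton_self _),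
        by abel⟩
      rw [hp _ (X.sub_mem hu (X.smul_mem _ hpX)), inner_sub_right, inner_smul_right,
        div_mul_cancel₀ _ hpp, sub_self]
    exact Submodule.finiteDimensional_of_le this
  · intro hfd
    have hle : Xᗮ ≤ (hyp X x)ᗮ := Submodule.orthogonal_le inf_le_left
    exact h3 (Submodule.finiteDimensional_of_le hle)

theorem projCLM_hyp {X : Submodule ℂ H} (hX : IsClosed (X : Set H)) {x : H} (hx : x ∈ X)
    (hx0 : x ≠ 0) (u : H) :
    projCLM (hyp X x) u = projCLM X u - (⟪x, u⟫_ℂ / ⟪x, x⟫_ℂ) • x := by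
  haveI : CompleteSpace X := hX.completeSpace_coe
  haveI : CompleteSpace (hyp X x) := (hyp_closed hX x).completeSpace_coe
  have hxx : ⟪x, x⟫_ℂ ≠ 0 := inner_self_ne_zero.2 hx0
  have e1 : projCLM X u = X.starProjection u := by
    simp only [projCLM, dif_pos hX]; rfl
  have e2 : projCLM (hyp X x) u = (hyp X x).starProjection u := by
    simp only [projCLM, dif_pos (hyp_closed hX x)]; rfl
  have hP : ∀ w ∈ X, ⟪u - X.starProjection u, w⟫_ℂ = 0 :=
    fun w hw => Submodule.starProjection_inner_eq_zero (K := X) u w hw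
  have hxP : ⟪x, X.starProjection u⟫_ℂ = ⟪x, u⟫_ℂ := by
    have := inner_eq_zero_symm.1 (hP x hx)
    rw [inner_sub_right, sub_eq_zero] at this
    exact this.symm
  rw [e1, e2]
  apply Submodule.eq_starProjection_of_mem_of_inner_eq_zero
  · refine mem_hyp.2 ⟨X.sub_mem (Submodule.starProjection_apply_mem X u) (X.smul_mem _ hx), ?_⟩
    rw [inner_sub_right, inner_smul_right, hxP, div_mul_cancel₀ _ hxx, sub_self]
  · intro w hw
    obtain ⟨hw1, hw2⟩ := mem_hyp.1 hw
    have : u - (X.starProjection u - (⟪x, u⟫_ℂ / ⟪x, x⟫_ℂ) • x)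
      = (u - X.starProjection u) + (⟪x, u⟫_ℂ / ⟪x, x⟫_ℂ) • x := by abel
    rw [this, inner_add_left, hP w hw1, inner_smul_left, hw2, mul_zero, add_zero]

theorem projCLM_self {X : Submodule ℂ H} (hX : IsClosed (X : Set H)) {x : H} (hx : x ∈ X) :
    projCLM X x = x := by
  haveI : CompleteSpace X := hX.completeSpace_coe
  have e1 : projCLM X x = X.starProjection x := by
    simp only [projCLM, dif_pos hX]; rfl
  rw [e1, Submodule.starProjection_eq_self_iff]
  exact hx

theorem inner_projCLM {X : Submodule ℂ H} (hX : IsClosed (X : Set H)) {x : H} (hx : x ∈ X) (u : H) :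
    ⟪x, projCLM X u⟫_ℂ = ⟪x, u⟫_ℂ := by
  haveI : CompleteSpace X := hX.completeSpace_coe
  have e1 : projCLM X u = X.starProjection u := by
    simp only [projCLM, dif_pos hX]; rfl
  have := inner_eq_zero_symm.1 (Submodule.starProjection_inner_eq_zero (K := X) u x hx)
  rw [inner_sub_right, sub_eq_zero] at this
  rw [e1]
  exact this.symm

theorem hyp_smul {X : Submodule ℂ H} {x z : H} {c : ℂ} (hc : c ≠ 0) (h : x = c • z) :
    hyp X x = hyp X z := by
  ext u
  rw [mem_hyp, mem_hyp, h, inner_smul_left]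
  simp [hc]

theorem hyp_inj {X : Submodule ℂ H} {x z : H} (hx : x ∈ X) (hz : z ∈ X) (hx0 : x ≠ 0) (hz0 : z ≠ 0)
    (h : hyp X x = hyp X z) : ∃ c : ℂ, c ≠ 0 ∧ x = c • z := by
  have hzz : ⟪z, z⟫_ℂ ≠ 0 := inner_self_ne_zero.2 hz0
  set u := x - (⟪z, x⟫_ℂ / ⟪z, z⟫_ℂ) • z with hu
  have h1 : u ∈ hyp X z := by
    refine mem_hyp.2 ⟨X.sub_mem hx (X.smul_mem _ hz), ?_⟩
    rw [hu, inner_sub_right, inner_smul_right, div_mul_cancel₀ _ hzz, sub_self]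
  have h2 := h1
  rw [← h] at h2
  have h3 : ⟪u, u⟫_ℂ = 0 := by
    conv_lhs => enter [2]; rw [hu]
    rw [← hu, inner_sub_right, inner_smul_right, inner_eq_zero_symm.1 (mem_hyp.1 h1).2,
      inner_eq_zero_symm.1 (mem_hyp.1 h2).2, mul_zero, sub_zero]
  rw [inner_self_eq_zero, hu, sub_eq_zero] at h3
  refine ⟨_, ?_, h3⟩
  intro h4
  rw [h4, zero_smul] at h3
  exact hx0 h3

theorem ortho_iff {X : Submodule ℂ H} (hX : IsClosed (X : Set H)) {x z : H} (hx : x ∈ X)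
    (hz : z ∈ X) (hx0 : x ≠ 0) (hz0 : z ≠ 0) :
    ⟪x, z⟫_ℂ = 0 ↔ OrthoAdjacent (hyp X x) (hyp X z) := by
  have hxx : ⟪x, x⟫_ℂ ≠ 0 := inner_self_ne_zero.2 hx0
  have hzz : ⟪z, z⟫_ℂ ≠ 0 := inner_self_ne_zero.2 hz0
  have key : ∀ {x z : H}, x ∈ X → z ∈ X → x ≠ 0 → z ≠ 0 → ∀ u,
      projCLM (hyp X x) (projCLM (hyp X z) u) = projCLM X (projCLM X u)
        - (⟪z, u⟫_ℂ / ⟪z, z⟫_ℂ) • z - (⟪x, u⟫_ℂ / ⟪x, x⟫_ℂ) • x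
        + ((⟪z, u⟫_ℂ / ⟪z, z⟫_ℂ) * (⟪x, z⟫_ℂ / ⟪x, x⟫_ℂ)) • x := by
    intro x z hx hz hx0 hz0 u
    rw [projCLM_hyp hX hx hx0, projCLM_hyp hX hz hz0, map_sub, map_smul, projCLM_self hX hz,
      inner_sub_right, inner_smul_right, inner_projCLM hX hx]
    module
  constructor
  · intro h
    have h' := inner_eq_zero_symm.1 h
    refine ⟨⟨(codim_iff _ _).2 ?_, (codim_iff _ _).2 ?_⟩, ?_⟩
    · have : hyp X x ⊓ hyp X z = hyp (hyp X x) z := by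
        ext u; simp only [Submodule.mem_inf, mem_hyp]; tauto
      rw [this]
      exact hyp_cov (mem_hyp.2 ⟨hz, h⟩) hz0
    · have : hyp X x ⊓ hyp X z = hyp (hyp X z) x := by
        ext u; simp only [Submodule.mem_inf, mem_hyp]; tauto
      rw [this]
      exact hyp_cov (mem_hyp.2 ⟨hx, h'⟩) hx0
    · ext u
      change projCLM (hyp X x) (projCLM (hyp X z) u) = projCLM (hyp X z) (projCLM (hyp X x) u)
      rw [key hx hz hx0 hz0, key hz hx hz0 hx0, h, h']
      simp only [zero_div, mul_zero, zero_smul, add_zero]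
      abel
  · rintro ⟨⟨h1, -⟩, h2⟩
    by_contra hne
    have h3 : projCLM (hyp X x) (projCLM (hyp X z) x) = projCLM (hyp X z) (projCLM (hyp X x) x) :=
      DFunLike.congr_fun h2 x
    rw [key hx hz hx0 hz0, key hz hx hz0 hx0, div_self hxx, one_mul] at h3
    have hne' : ⟪z, x⟫_ℂ ≠ 0 := fun h => hne (inner_eq_zero_symm.1 h)
    set a := ⟪z, x⟫_ℂ / ⟪z, z⟫_ℂ with ha
    set b := ⟪x, z⟫_ℂ / ⟪x, x⟫_ℂ with hb
    have ha0 : a ≠ 0 := div_ne_zero hne' hzz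
    have hb0 : b ≠ 0 := div_ne_zero hne hxx
    have h4 : (a * b) • x = a • z := by
      rw [sub_right_comm] at h3
      exact add_left_cancel h3
    have h5 : x = b⁻¹ • z := by
      have := congrArg (fun v => (a * b)⁻¹ • v) h4
      simp only [smul_smul] at this
      rw [inv_mul_cancel₀ (mul_ne_zero ha0 hb0), one_smul] at this
      rw [this]; congr 1; field_simp
    have h6 := hyp_smul (X := X) (inv_ne_zero hb0) h5
    rw [codim_iff, h6, inf_idem] at h1
    exact lt_irrefl _ h1.lt

theorem exists_orth {X : Submodule ℂ H} (hX : ¬ FiniteDimensional ℂ X) (x y z : X) :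
    ∃ w : X, w ≠ 0 ∧ ⟪x, w⟫_ℂ = 0 ∧ ⟪y, w⟫_ℂ = 0 ∧ ⟪z, w⟫_ℂ = 0 := by
  let S : Submodule ℂ X := Submodule.span ℂ {x, y, z}
  haveI hfd : FiniteDimensional ℂ S := FiniteDimensional.span_of_finite ℂ (Set.toFinite _)
  haveI : CompleteSpace S := FiniteDimensional.complete ℂ _
  have hS : Sᗮ ≠ ⊥ := by
    intro h
    rw [Submodule.orthogonal_eq_bot_iff] at h
    apply hX
    have : FiniteDimensional ℂ (⊤ : Submodule ℂ X) := h ▸ hfd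
    exact Module.finite_def.2 (Module.Finite.iff_fg.1 this)
  obtain ⟨w, hw, hw0⟩ := Submodule.exists_mem_ne_zero_of_ne_bot hS
  rw [Submodule.mem_orthogonal] at hw
  exact ⟨w, hw0, hw x (Submodule.subset_span (by simp)), hw y (Submodule.subset_span (by simp)),
    hw z (Submodule.subset_span (by simp))⟩

end

/-- if a bijective transformation `f` of `G_∞(H)` preserves ortho-adjacency in
both directions and maps the top `G¹(X)` onto the top `G¹(X')`, then there is a unitary or
anti-unitary operator `U : X → X'` with `f M = U(M)` for every `M ∈ G¹(X)`. -/
theorem stmt11 (hH : ¬FiniteDimensional ℂ H)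
    (f : Submodule ℂ H → Submodule ℂ H)
    (hbij : Set.BijOn f (Ginf (H := H)) (Ginf (H := H)))
    (hf : ∀ X ∈ Ginf (H := H), ∀ Y ∈ Ginf (H := H),
      OrthoAdjacent X Y ↔ OrthoAdjacent (f X) (f Y))
    (X X' : Submodule ℂ H) (hX : X ∈ Ginf (H := H)) (hX' : X' ∈ Ginf (H := H))
    (htop : f '' topSet X = topSet X') :
    (∃ U : ↥X ≃ₗᵢ[ℂ] ↥X', ∀ M ∈ topSet X, f M = imL X X' U M) ∨
    (∃ U : ↥X ≃ₗᵢ⋆[ℂ] ↥X', ∀ M ∈ topSet X, f M = imC X X' U M) := by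
  have hXc := hX.1
  have hXc' := hX'.1
  have hex : ∀ x : X, ∃ w : X', (x = 0 → w = 0) ∧
      (x ≠ 0 → w ≠ 0 ∧ f (hyp X (x : H)) = hyp X' (w : H)) := by
    intro x
    by_cases hx : x = 0
    · exact ⟨0, fun _ => rfl, fun h => absurd hx h⟩
    have h1 : hyp X (x : H) ∈ topSet X := (top_iff hXc _).2 ⟨x, x.2, by simpa using hx, rfl⟩
    have h2 : f (hyp X (x : H)) ∈ topSet X' := htop ▸ Set.mem_image_of_mem f h1
    obtain ⟨w, hw, hw0, h3⟩ := (top_iff hXc' _).1 h2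
    exact ⟨⟨w, hw⟩, fun h => absurd h hx, fun _ => ⟨by simpa using hw0, h3⟩⟩
  choose g hg0 hg1 using hex
  have hg : ∀ x y : X, inner ℂ x y = 0 ↔ inner ℂ (g x) (g y) = 0 := by
    intro x y
    by_cases hx : x = 0
    · simp [hx, hg0 0 rfl]
    by_cases hy : y = 0
    · simp [hy, hg0 0 rfl]
    have hx1 := hg1 x hx
    have hy1 := hg1 y hy
    rw [Submodule.coe_inner, Submodule.coe_inner,
      ortho_iff hXc x.2 y.2 (by simpa using hx) (by simpa using hy),
      ortho_iff hXc' (g x).2 (g y).2 (by simpa using hx1.1) (by simpa using hy1.1),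
      hf _ (hyp_ginf hX _) _ (hyp_ginf hX _), hx1.2, hy1.2]
  have hs : ∀ w : X', w ≠ 0 → ∃ x, ∃ c : ℂ, c ≠ 0 ∧ g x = c • w := by
    intro w hw
    have hw0 : (w : H) ≠ 0 := by simpa using hw
    have h1 : hyp X' (w : H) ∈ f '' topSet X := htop ▸ (top_iff hXc' _).2 ⟨w, w.2, hw0, rfl⟩
    obtain ⟨M, hM, h2⟩ := h1
    obtain ⟨x, hx, hx0, rfl⟩ := (top_iff hXc _).1 hM
    have h3 := hg1 ⟨x, hx⟩ (by simpa using hx0)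
    obtain ⟨c, hc, h4⟩ := hyp_inj (g ⟨x, hx⟩).2 w.2 (by simpa using h3.1) hw0 (h3.2.symm.trans h2)
    exact ⟨⟨x, hx⟩, c, hc, Subtype.ext h4⟩
  obtain ⟨σ, hσ, U, hadd, hsm, hn, hsurj, hU⟩ := uh_core (exists_orth hX.2.1) g hg hs
  have hfin : ∀ M ∈ topSet X, ∀ w : H, w ∈ f M ↔ ∃ u : X, (u : H) ∈ M ∧ ((U u : X') : H) = w := by
    intro M hM w
    obtain ⟨x, hx, hx0, rfl⟩ := (top_iff hXc _).1 hM
    have h3 := hg1 ⟨x, hx⟩ (by simpa using hx0)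
    have h4 : f (hyp X x) = hyp X' (g ⟨x, hx⟩ : H) := h3.2
    have h5 : ∀ u : X, inner ℂ x (u : H) = 0 ↔ inner ℂ (g ⟨x, hx⟩ : H) (U u : H) = 0 := by
      intro u
      obtain ⟨c, hc, h6⟩ := hU u
      have h7 := hg ⟨x, hx⟩ u
      rw [h6, inner_smul_right, Submodule.coe_inner, Submodule.coe_inner] at h7
      simpa [hc] using h7
    rw [h4, mem_hyp]
    constructor
    · rintro ⟨hw, h⟩
      obtain ⟨u, hu⟩ := hsurj ⟨w, hw⟩
      have hu' : ((U u : X') : H) = w := by rw [hu]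
      refine ⟨u, mem_hyp.2 ⟨u.2, ?_⟩, hu'⟩
      rw [h5, hu']; exact h
    · rintro ⟨u, hu, rfl⟩
      exact ⟨(U u).2, (h5 u).1 (mem_hyp.1 hu).2⟩
  rcases hσ with rfl | rfl
  · left
    let V : X →ₗᵢ[ℂ] X' :=
      { toFun := U, map_add' := hadd, map_smul' := hsm, norm_map' := hn }
    refine ⟨LinearIsometryEquiv.ofSurjective V hsurj, fun M hM => ?_⟩
    ext w
    rw [hfin M hM w, imL]
    simp only [Submodule.mem_map, Submodule.mem_comap]
    constructor
    · rintro ⟨u, hu, rfl⟩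
      exact ⟨U u, ⟨u, hu, rfl⟩, rfl⟩
    · rintro ⟨_, ⟨u, hu, rfl⟩, rfl⟩
      exact ⟨u, hu, rfl⟩
  · right
    let V : X →ₗᵢ⋆[ℂ] X' :=
      { toFun := U, map_add' := hadd, map_smul' := hsm, norm_map' := hn }
    refine ⟨LinearIsometryEquiv.ofSurjective V hsurj, fun M hM => ?_⟩
    ext w
    rw [hfin M hM w, imC]
    simp only [Submodule.mem_map, Submodule.mem_comap]
    constructor
    · rintro ⟨u, hu, rfl⟩
      exact ⟨U u, ⟨u, hu, rfl⟩, rfl⟩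
    · rintro ⟨_, ⟨u, hu, rfl⟩, rfl⟩
      exact ⟨u, hu, rfl⟩
end
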